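/- (i) Let 1 ≤ p_0 ≤ p_1 ≤ q_1 ≤ q_0 ≤ ∞ and 1 ≤ r ≤ ∞. Then for every N ∈ ℕ there is a constant C_N such that for all j ≥ 0, ‖𝒜_j‖_{L^{p_1}→L^{q_1}(L^r)} ≲ ‖𝒜_j‖_{L^{p_0}→L^{q_0}(L^r)} + C_N 2^{−jN}, with implicit constant independent of j. (ii) If r_0 ≤ r_1 and 1 ≤ p ≤ q ≤ ∞, then ‖𝒜_j‖_{L^p→L^q(L^{r_0})} ≲ ‖𝒜_j‖_{L^p→L^q(L^{r_1})} uniformly in j. -/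

import Mathlib

open MeasureTheory Metric Set
open scoped ENNReal NNReal FourierTransform

noncomputable section

/-- Euclidean `d`-space. -/
abbrev Euc (d : ℕ) : Type := EuclideanSpace ℝ (Fin d)

/-- The normalized surface measure `σ` on the unit sphere `S^{d-1} ⊆ ℝ^d`. -/
def sphereMeasure (d : ℕ) : Measure (Euc d) :=
  (((volume : Measure (Euc d)).toSphere Set.univ)⁻¹ : ℝ≥0∞) •
    ((volume : Measure (Euc d)).toSphere.map Subtype.val)

/-- The spherical average `A_t f(x) = ∫_{S^{d-1}} f(x - t y) dσ(y)`. -/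
def sphAvg {d : ℕ} (f : Euc d → ℂ) (t : ℝ) (x : Euc d) : ℂ :=
  ∫ y, f (x - t • y) ∂(sphereMeasure d)

/-- The dyadic symbols `β_j` built from the bump `β₀`:
`β_j(s) = β₀(2^{-j} s) - β₀(2^{1-j} s)` for `j ≥ 1`. -/
def betaJ (β₀ : ℝ → ℝ) : ℕ → ℝ → ℝ
  | 0 => β₀
  | (j + 1) => fun s => β₀ ((2 : ℝ) ^ (-(j + 1 : ℤ)) * s) - β₀ ((2 : ℝ) ^ (-(j : ℤ)) * s)

/-- The frequency localization `L_j` with symbol `β_j(|ξ|)`. -/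
def freqLoc (d : ℕ) (β₀ : ℝ → ℝ) (j : ℕ) (f : Euc d → ℂ) : Euc d → ℂ :=
  𝓕⁻ (fun ξ => (betaJ β₀ j ‖ξ‖ : ℂ) * 𝓕 f ξ)

/-- `χ` is an admissible time cutoff: smooth, `χ = 1` on a neighborhood of `[1,2]`,
supported in `[1/2,4]`. -/
def IsCutoff (χ : ℝ → ℝ) : Prop :=
  ContDiff ℝ (⊤ : ℕ∞) χ ∧ (∃ U : Set ℝ, IsOpen U ∧ Set.Icc 1 2 ⊆ U ∧ Set.EqOn χ 1 U) ∧
    Function.support χ ⊆ Set.Icc (1 / 2 : ℝ) 4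

/-- `β₀` is an admissible frequency bump: smooth, `β₀(s) = 1` for `|s| < 1/2` and
`β₀(s) = 0` for `|s| > 1`. -/
def IsBump (β₀ : ℝ → ℝ) : Prop :=
  ContDiff ℝ (⊤ : ℕ∞) β₀ ∧ (∀ s : ℝ, |s| < 1 / 2 → β₀ s = 1) ∧ ∀ s : ℝ, 1 < |s| → β₀ s = 0

/-- The frequency-localized operator `𝒜_j f(x,t) = χ(t) A_t L_j f(x)`. -/
def Aj (d : ℕ) (χ β₀ : ℝ → ℝ) (j : ℕ) (f : Euc d → ℂ) (x : Euc d) (t : ℝ) : ℂ :=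
  (χ t : ℂ) * sphAvg (freqLoc d β₀ j f) t x

/-- `L^q` norm (with respect to `μ`) of an `ℝ≥0∞`-valued function, `1 ≤ q ≤ ∞`. -/
def lqNorm {α : Type*} [MeasurableSpace α] (q : ℝ≥0∞) (g : α → ℝ≥0∞)
    (μ : Measure α) : ℝ≥0∞ :=
  if q = ∞ then essSup g μ else (∫⁻ x, g x ^ q.toReal ∂μ) ^ (1 / q.toReal)

/-- The mixed norm `‖F‖_{L^q(L^r)}` of `F : ℝ^d × ℝ → ℂ`. -/
def mixedNorm (d : ℕ) (q r : ℝ≥0∞) (F : Euc d → ℝ → ℂ) : ℝ≥0∞ :=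
  lqNorm q (fun x => lqNorm r (fun t => (‖F x t‖₊ : ℝ≥0∞)) volume) volume

/-- The operator norm `‖𝒜_j‖_{L^p → L^q(L^r)}`. -/
def AjOpNorm (d : ℕ) (χ β₀ : ℝ → ℝ) (j : ℕ) (p q r : ℝ≥0∞) : ℝ≥0∞ :=
  ⨆ (f : Euc d → ℂ) (_ : eLpNorm f p volume ≤ 1), mixedNorm d q r (Aj d χ β₀ j f)

/-!
Away from `|v| ≤ 1` the convolution kernel of `L_j` is `O(2^{-jN} (1 + |v|)^{-(d+1)})`, and the
spherical means in `𝒜_j` move points by a bounded distance only. So, for `x` in the unit ball around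
`y`, the norm `‖𝒜_j f(x, ·)‖_r` depends only on `f` in a larger ball around `y`, up to `2^{-jN}`
times an average of `|f|` with weight `w(y - ·)`, where `w(v) = (1 + |v|)^{-(d+1)}`. Hölder's
inequality on these balls gives, with `U(y)` the `L^{p₁}` norm of `f` weighted by `w(y - ·)`,
`‖𝒜_j f‖_{L^{q₁}(B(y,1); L^r)} ≲ (‖𝒜_j‖_{L^{p₀} → L^{q₀}(L^r)} + 2^{-jN}) U(y)`. Taking `L^{q₁}`
norms in `y`, part (i) follows from Young's inequality, as `w ∈ L^1 ∩ L^∞` and `p₁ ≤ q₁`. Part (ii)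
is Hölder's inequality in `t` on the support of `χ`.
-/

section MixedNorm

variable {d : ℕ} {q r : ℝ≥0∞}

lemma lqNorm_enorm {α E : Type*} [MeasurableSpace α] {μ : Measure α} [TopologicalSpace E]
    [ContinuousENorm E] (hq : q ≠ 0) (f : α → E) :
    lqNorm q (fun x => ‖f x‖ₑ) μ = eLpNorm f q μ := by
  simp only [lqNorm, eLpNorm, eLpNorm', eLpNormEssSup, hq, if_false]

lemma mixedNorm_eq_eLpNorm (hq : q ≠ 0) (hr : r ≠ 0) (F : Euc d → ℝ → ℂ) :
    mixedNorm d q r F = eLpNorm (fun x => eLpNorm (F x) r) q := by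
  rw [← lqNorm_enorm hq]
  simp only [mixedNorm, ← enorm_eq_nnnorm, lqNorm_enorm hr, enorm_eq_self]

lemma mixedNorm_zero (hq : q ≠ 0) (hr : r ≠ 0) : mixedNorm d q r 0 = 0 := by
  simp only [mixedNorm_eq_eLpNorm hq hr, Pi.zero_apply, eLpNorm_zero, eLpNorm_zero']

lemma mixedNorm_const_smul_le (hq : q ≠ 0) (hr : r ≠ 0) (c : ℂ) (F : Euc d → ℝ → ℂ) :
    mixedNorm d q r (c • F) ≤ ‖c‖ₑ * mixedNorm d q r F := by
  rw [mixedNorm_eq_eLpNorm hq hr, mixedNorm_eq_eLpNorm hq hr]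
  refine eLpNorm_le_nnreal_smul_eLpNorm_of_ae_le_mul' (.of_forall fun x => ?_) q
  exact eLpNorm_const_smul_le (c := c) (f := F x)

end MixedNorm

section Holder

variable {α E : Type*} [MeasurableSpace α] [TopologicalSpace E] [ContinuousENorm E] {p q : ℝ≥0∞}

lemma exists_eLpNorm_le_eLpNorm_of_measure_univ_le (hp : p ≠ 0) (hpq : p ≤ q) {M : ℝ≥0∞}
    (hM : M ≠ ∞) :
    ∃ C : ℝ≥0, ∀ (ν : Measure α) (f : α → E), ν univ ≤ M → AEStronglyMeasurable f ν →
      eLpNorm f p ν ≤ C * eLpNorm f q ν := by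
  have hexp : 0 ≤ 1 / p.toReal - 1 / q.toReal := by
    obtain rfl | hq := eq_or_ne q ∞
    · simp
    have hp' : 0 < p.toReal := ENNReal.toReal_pos hp (ne_top_of_le_ne_top hq hpq)
    exact sub_nonneg.2 (one_div_le_one_div_of_le hp' (ENNReal.toReal_mono hq hpq))
  refine ⟨(M ^ (1 / p.toReal - 1 / q.toReal)).toNNReal, fun ν f hν hf => ?_⟩
  rw [ENNReal.coe_toNNReal (ENNReal.rpow_ne_top_of_nonneg hexp hM), mul_comm]
  exact (eLpNorm_le_eLpNorm_mul_rpow_measure_univ hpq hf).trans (by gcongr)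

end Holder

section TranslatedDensity

variable {G : Type*} [AddCommGroup G] [MeasurableSpace G]
  {E : Type*} [TopologicalSpace E] [ContinuousENorm E] {μ : Measure G} {w : G → ℝ≥0∞} {p q : ℝ≥0∞}

/-- The measure `w(y - ·) μ`. Integrating `‖f‖ ^ p` against it gives the value at `y` of the
convolution `‖f‖ ^ p ∗ w`, so its `L^p` norm is a weighted local norm of `f` around `y`. -/
def translatedDensity (μ : Measure G) (w : G → ℝ≥0∞) (y : G) : Measure G :=
  μ.withDensity fun z => w (y - z)

lemma translatedDensity_le (hw : ∀ v, w v ≤ 1) (y : G) : translatedDensity μ w y ≤ μ :=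
  (withDensity_mono (.of_forall fun _ => hw _)).trans_eq withDensity_one

variable [MeasurableAdd₂ G] [MeasurableNeg G]

lemma translatedDensity_univ [μ.IsAddLeftInvariant] [μ.IsNegInvariant] (y : G) :
    translatedDensity μ w y univ = ∫⁻ v, w v ∂μ := by
  rw [translatedDensity, withDensity_apply _ MeasurableSet.univ, Measure.restrict_univ,
    lintegral_sub_left_eq_self]

lemma lintegral_lintegral_translatedDensity [SFinite μ] [μ.IsAddLeftInvariant]
    (hw : Measurable w) {h : G → ℝ≥0∞} (hh : AEMeasurable h μ) :
    ∫⁻ y, ∫⁻ z, h z ∂(translatedDensity μ w y) ∂μ = (∫⁻ v, w v ∂μ) * ∫⁻ z, h z ∂μ := by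
  calc ∫⁻ y, ∫⁻ z, h z ∂(translatedDensity μ w y) ∂μ
      = ∫⁻ y, ∫⁻ z, w (y - z) * h z ∂μ ∂μ := by
        refine lintegral_congr fun y => ?_
        exact lintegral_withDensity_eq_lintegral_mul₀ (by fun_prop) hh
    _ = ∫⁻ z, ∫⁻ y, w (y - z) * h z ∂μ ∂μ :=
        lintegral_lintegral_swap (AEMeasurable.mul (by fun_prop) hh.comp_snd)
    _ = ∫⁻ z, (∫⁻ v, w v ∂μ) * h z ∂μ := by
        refine lintegral_congr fun z => ?_
        rw [lintegral_mul_const _ (by fun_prop), lintegral_sub_right_eq_self]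
    _ = (∫⁻ v, w v ∂μ) * ∫⁻ z, h z ∂μ := lintegral_const_mul'' _ hh

lemma lintegral_eLpNorm_translatedDensity_rpow [SFinite μ] [μ.IsAddLeftInvariant]
    (hw : Measurable w) (hp : p ≠ 0) (hp' : p ≠ ∞) {f : G → E} (hf : AEStronglyMeasurable f μ) :
    ∫⁻ y, eLpNorm f p (translatedDensity μ w y) ^ p.toReal ∂μ =
      (∫⁻ v, w v ∂μ) * eLpNorm f p μ ^ p.toReal := by
  lift p to ℝ≥0 using hp'
  simp only [ENNReal.coe_toReal, eLpNorm_nnreal_pow_eq_lintegral (mod_cast hp)]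
  exact lintegral_lintegral_translatedDensity hw (hf.enorm.pow_const _)

-- Interpolates between the cases `q = p`, which is Fubini, and `q = ∞`, which is `w ≤ 1`.
lemma eLpNorm_eLpNorm_translatedDensity_le [SFinite μ] [μ.IsAddLeftInvariant]
    (hw : Measurable w) (hw₁ : ∀ v, w v ≤ 1) (hp : p ≠ 0) (hpq : p ≤ q) {f : G → E}
    (hf : MemLp f p μ) :
    eLpNorm (fun y => eLpNorm f p (translatedDensity μ w y)) q μ ≤
      (∫⁻ v, w v ∂μ) ^ (1 / q.toReal) * eLpNorm f p μ := by
  set F := eLpNorm f p μ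
  set u := fun y => eLpNorm f p (translatedDensity μ w y)
  have hu : ∀ y, u y ≤ F := fun y => eLpNorm_mono_measure f (translatedDensity_le hw₁ y)
  obtain rfl | hq := eq_or_ne q ∞
  · simpa using eLpNormEssSup_le_of_ae_enorm_bound (.of_forall hu)
  have hp' : p ≠ ∞ := ne_top_of_le_ne_top hq hpq
  have hp_pos : 0 < p.toReal := ENNReal.toReal_pos hp hp'
  have hpq' : p.toReal ≤ q.toReal := ENNReal.toReal_mono hq hpq
  have hq_pos : 0 < q.toReal := hp_pos.trans_le hpq'
  have hsplit : ∀ a : ℝ≥0∞, a ^ q.toReal = a ^ (q.toReal - p.toReal) * a ^ p.toReal := fun a => by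
    rw [← ENNReal.rpow_add_of_nonneg _ _ (sub_nonneg.2 hpq') hp_pos.le, sub_add_cancel]
  have hint : ∫⁻ y, u y ^ q.toReal ∂μ ≤ (∫⁻ v, w v ∂μ) * F ^ q.toReal :=
    calc ∫⁻ y, u y ^ q.toReal ∂μ
        ≤ ∫⁻ y, F ^ (q.toReal - p.toReal) * u y ^ p.toReal ∂μ := by
          refine lintegral_mono fun y => ?_
          rw [hsplit]
          gcongr
          exact hu y
      _ = F ^ (q.toReal - p.toReal) * ((∫⁻ v, w v ∂μ) * F ^ p.toReal) := by
          rw [lintegral_const_mul' _ _ (ENNReal.rpow_ne_top_of_nonneg (sub_nonneg.2 hpq') hf.2.ne),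
            lintegral_eLpNorm_translatedDensity_rpow hw hp hp' hf.1]
      _ = (∫⁻ v, w v ∂μ) * F ^ q.toReal := by rw [hsplit]; ring
  rw [eLpNorm_eq_lintegral_rpow_enorm_toReal (ne_bot_of_le_ne_bot hp hpq) hq]
  calc (∫⁻ y, u y ^ q.toReal ∂μ) ^ (1 / q.toReal)
      ≤ ((∫⁻ v, w v ∂μ) * F ^ q.toReal) ^ (1 / q.toReal) := by gcongr
    _ = (∫⁻ v, w v ∂μ) ^ (1 / q.toReal) * F := by
      rw [ENNReal.mul_rpow_of_nonneg _ _ (by positivity), one_div,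
        ENNReal.rpow_rpow_inv hq_pos.ne']

end TranslatedDensity

section Localization

variable {V : Type*} [NormedAddCommGroup V] [MeasurableSpace V] [BorelSpace V]
  {μ : Measure V} {E : Type*} [TopologicalSpace E] [ContinuousENorm E]
  {w : V → ℝ≥0∞} {δ : ℝ≥0} {R ρ : ℝ} {p p₀ p₁ q q₀ q₁ : ℝ≥0∞}

lemma translatedDensity_indicator_ball (R : ℝ) (y : V) :
    translatedDensity μ ((ball 0 R).indicator 1) y = μ.restrict (ball y R) := by
  rw [← withDensity_indicator_one measurableSet_ball, translatedDensity]
  congr 1 with z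
  simp only [indicator, mem_ball, dist_eq_norm, sub_zero, norm_sub_rev z y, Pi.one_apply]

lemma smul_restrict_ball_le_translatedDensity (hδ : ∀ v ∈ ball (0 : V) R, δ ≤ w v) (y : V) :
    (δ : ℝ≥0∞) • μ.restrict (ball y R) ≤ translatedDensity μ w y := by
  rw [← translatedDensity_indicator_ball, translatedDensity,
    ← withDensity_smul' _ _ ENNReal.coe_ne_top]
  refine withDensity_mono (.of_forall fun z => ?_)
  by_cases hz : y - z ∈ ball 0 R
  · simpa [indicator_of_mem hz] using hδ _ hz
  · simp [indicator_of_notMem hz]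

lemma eLpNorm_restrict_ball_le_translatedDensity (hδ₀ : δ ≠ 0)
    (hδ : ∀ v ∈ ball (0 : V) R, δ ≤ w v) (f : V → E) (y : V) :
    eLpNorm f p (μ.restrict (ball y R)) ≤
      (δ⁻¹ ^ p.toReal⁻¹ : ℝ≥0) * eLpNorm f p (translatedDensity μ w y) := by
  have hδ' : (δ : ℝ≥0∞)⁻¹ ≠ 0 := ENNReal.inv_ne_zero.2 ENNReal.coe_ne_top
  have hle : μ.restrict (ball y R) ≤ (δ : ℝ≥0∞)⁻¹ • translatedDensity μ w y := by
    calc μ.restrict (ball y R)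
        = (δ : ℝ≥0∞)⁻¹ • (δ : ℝ≥0∞) • μ.restrict (ball y R) := by
          rw [smul_smul, ENNReal.inv_mul_cancel (by simpa) ENNReal.coe_ne_top, one_smul]
      _ ≤ (δ : ℝ≥0∞)⁻¹ • translatedDensity μ w y := by
          gcongr
          exact smul_restrict_ball_le_translatedDensity hδ y
  calc eLpNorm f p (μ.restrict (ball y R))
      ≤ eLpNorm f p ((δ : ℝ≥0∞)⁻¹ • translatedDensity μ w y) := eLpNorm_mono_measure f hle
    _ = (δ⁻¹ ^ p.toReal⁻¹ : ℝ≥0) * eLpNorm f p (translatedDensity μ w y) := by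
        rw [eLpNorm_smul_measure_of_ne_zero hδ', smul_eq_mul]
        simp [ENNReal.coe_rpow_of_nonneg, ENNReal.coe_inv hδ₀]

variable [ProperSpace V] [μ.IsAddHaarMeasure]

lemma exists_eLpNorm_restrict_ball_le_translatedDensity (hp₀ : p₀ ≠ 0) (hp : p₀ ≤ p₁)
    (hδ₀ : δ ≠ 0) (hδ : ∀ v ∈ ball (0 : V) R, δ ≤ w v) :
    ∃ C : ℝ≥0, ∀ (f : V → E) (y : V), AEStronglyMeasurable f μ →
      eLpNorm f p₀ (μ.restrict (ball y R)) ≤ C * eLpNorm f p₁ (translatedDensity μ w y) := by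
  obtain ⟨C, hC⟩ := exists_eLpNorm_le_eLpNorm_of_measure_univ_le (α := V) (E := E) hp₀ hp
    (measure_ball_lt_top (μ := μ) (x := 0) (r := R)).ne
  refine ⟨C * δ⁻¹ ^ p₁.toReal⁻¹, fun f y hf => ?_⟩
  calc eLpNorm f p₀ (μ.restrict (ball y R))
      ≤ C * eLpNorm f p₁ (μ.restrict (ball y R)) :=
        hC _ _ (by rw [Measure.restrict_apply_univ, Measure.addHaar_ball_center]) hf.restrict
    _ ≤ C * ((δ⁻¹ ^ p₁.toReal⁻¹ : ℝ≥0) * eLpNorm f p₁ (translatedDensity μ w y)) := by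
        gcongr
        exact eLpNorm_restrict_ball_le_translatedDensity hδ₀ hδ f y
    _ = (C * δ⁻¹ ^ p₁.toReal⁻¹ : ℝ≥0) * eLpNorm f p₁ (translatedDensity μ w y) := by
        rw [ENNReal.coe_mul, mul_assoc]

lemma exists_eLpNorm_restrict_ball_le_add_const (hq₁ : q₁ ≠ 0) (hq : q₁ ≤ q₀) (hq₀ : 1 ≤ q₀)
    (ρ : ℝ) :
    ∃ C : ℝ≥0, ∀ (y : V) (g h : V → ℝ≥0∞) (c : ℝ≥0∞), AEMeasurable g μ → AEMeasurable h μ →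
      (∀ x ∈ ball y ρ, g x ≤ h x + c) →
      eLpNorm g q₁ (μ.restrict (ball y ρ)) ≤ C * (eLpNorm h q₀ μ + c) := by
  set M := μ (ball 0 ρ)
  have hM : M ≠ ∞ := measure_ball_lt_top.ne
  have hball : ∀ y, μ.restrict (ball y ρ) univ = M := fun y => by
    rw [Measure.restrict_apply_univ, Measure.addHaar_ball_center]
  obtain ⟨C, hC⟩ := exists_eLpNorm_le_eLpNorm_of_measure_univ_le (α := V) (E := ℝ≥0∞) hq₁ hq hM
  set B := M ^ q₀.toReal⁻¹
  have hB : B ≠ ∞ := ENNReal.rpow_ne_top_of_nonneg (by positivity) hM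
  refine ⟨C * (1 + B.toNNReal), fun y g h c hg hh hle => ?_⟩
  set ν := μ.restrict (ball y ρ)
  have hconst : eLpNorm (fun _ : V => c) q₀ ν ≤ B * c := by
    simpa [ν, hball, B, mul_comm] using
      eLpNorm_le_of_ae_enorm_bound (p := q₀) (μ := ν) (f := fun _ => c) (.of_forall fun _ => le_rfl)
  calc eLpNorm g q₁ ν
      ≤ C * eLpNorm g q₀ ν := hC ν g (hball y).le hg.aestronglyMeasurable.restrict
    _ ≤ C * eLpNorm (h + fun _ => c) q₀ ν := by
        gcongr 1
        refine eLpNorm_mono_enorm_ae ?_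
        filter_upwards [ae_restrict_mem measurableSet_ball] with x hx using hle x hx
    _ ≤ C * (eLpNorm h q₀ ν + eLpNorm (fun _ => c) q₀ ν) := by
        gcongr
        exact eLpNorm_add_le hh.aestronglyMeasurable.restrict aestronglyMeasurable_const hq₀
    _ ≤ C * ((1 + B) * eLpNorm h q₀ μ + (1 + B) * c) := by
        gcongr
        · exact (eLpNorm_mono_measure h Measure.restrict_le_self).trans
            (le_mul_of_one_le_left' le_self_add)
        · exact hconst.trans (by gcongr; exact le_add_self)
    _ = (C * (1 + B.toNNReal) : ℝ≥0) * (eLpNorm h q₀ μ + c) := by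
        push_cast
        rw [ENNReal.coe_toNNReal hB]
        ring

lemma eLpNorm_top_le_of_forall_restrict_ball_le (hρ : 0 < ρ) {g b : V → ℝ≥0∞}
    (h : ∀ y, eLpNorm g ∞ (μ.restrict (ball y ρ)) ≤ b y) : eLpNorm g ∞ μ ≤ eLpNorm b ∞ μ := by
  simp only [eLpNorm_exponent_top, eLpNormEssSup, enorm_eq_self] at h ⊢
  set B := essSup b μ
  have hdense : Dense {y | b y ≤ B} := Measure.dense_of_ae (ENNReal.ae_le_essSup b)
  obtain ⟨T, hTB, hT, hTdense⟩ := hdense.exists_countable_dense_subset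
  have hcover : ∀ᵐ x ∂μ, ∀ y ∈ T, x ∈ ball y ρ → g x ≤ B := by
    refine (ae_ball_iff hT).2 fun y hy => (ae_restrict_iff' measurableSet_ball).1 ?_
    filter_upwards [ENNReal.ae_le_essSup g] with x hx using hx.trans ((h y).trans (hTB hy))
  refine essSup_le_of_ae_le B ?_
  filter_upwards [hcover] with x hx
  obtain ⟨y, hy, hxy⟩ := hTdense.exists_dist_lt x hρ
  exact hx y hy hxy

lemma eLpNorm_le_of_forall_restrict_ball_le (hq : q ≠ 0) (hρ : 0 < ρ) {g b : V → ℝ≥0∞}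
    (hg : AEMeasurable g μ) (h : ∀ y, eLpNorm g q (μ.restrict (ball y ρ)) ≤ b y) :
    eLpNorm g q μ ≤ (μ (ball 0 ρ))⁻¹ ^ (1 / q.toReal) * eLpNorm b q μ := by
  obtain rfl | hq' := eq_or_ne q ∞
  · simpa using eLpNorm_top_le_of_forall_restrict_ball_le hρ h
  have hq_pos : 0 < q.toReal := ENNReal.toReal_pos hq hq'
  have hM : μ (ball 0 ρ) ≠ 0 := (measure_ball_pos μ 0 hρ).ne'
  have hM' : μ (ball 0 ρ) ≠ ∞ := measure_ball_lt_top.ne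
  have hpow : eLpNorm g q μ ^ q.toReal ≤ (μ (ball 0 ρ))⁻¹ * ∫⁻ y, b y ^ q.toReal ∂μ := by
    rw [← ENNReal.mul_le_iff_le_inv hM hM']
    calc μ (ball 0 ρ) * eLpNorm g q μ ^ q.toReal
        = ∫⁻ y, eLpNorm g q (μ.restrict (ball y ρ)) ^ q.toReal ∂μ := by
          simp_rw [← translatedDensity_indicator_ball]
          rw [lintegral_eLpNorm_translatedDensity_rpow (measurable_one.indicator measurableSet_ball)
            hq hq' hg.aestronglyMeasurable, lintegral_indicator_one measurableSet_ball]
      _ ≤ ∫⁻ y, b y ^ q.toReal ∂μ := by gcongr with y; exact h y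
  calc eLpNorm g q μ = (eLpNorm g q μ ^ q.toReal) ^ (1 / q.toReal) := by
        rw [one_div, ENNReal.rpow_rpow_inv hq_pos.ne']
    _ ≤ ((μ (ball 0 ρ))⁻¹ * ∫⁻ y, b y ^ q.toReal ∂μ) ^ (1 / q.toReal) := by gcongr
    _ = (μ (ball 0 ρ))⁻¹ ^ (1 / q.toReal) * eLpNorm b q μ := by
        rw [ENNReal.mul_rpow_of_nonneg _ _ (by positivity),
          eLpNorm_eq_lintegral_rpow_enorm_toReal hq hq']
        simp only [enorm_eq_self]

lemma exists_eLpNorm_restrict_ball_le_of_localized (hp₀ : p₀ ≠ 0) (hp : p₀ ≤ p₁) (hp₁ : 1 ≤ p₁)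
    (hq₁ : q₁ ≠ 0) (hq : q₁ ≤ q₀) (hq₀ : 1 ≤ q₀) (hw₁ : ∀ v, w v ≤ 1) (hw_int : ∫⁻ v, w v ∂μ ≠ ∞)
    (hδ₀ : δ ≠ 0) (hδ : ∀ v ∈ ball (0 : V) R, δ ≤ w v) (ρ : ℝ) :
    ∃ C : ℝ≥0, ∀ (A ε : ℝ≥0∞) (f : V → E) (g h : V → ℝ≥0∞) (y : V),
      AEStronglyMeasurable f μ → AEMeasurable g μ → AEMeasurable h μ →
      (∀ x ∈ ball y ρ, g x ≤ h x + ε * eLpNorm f 1 (translatedDensity μ w y)) →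
      eLpNorm h q₀ μ ≤ A * eLpNorm f p₀ (μ.restrict (ball y R)) →
      eLpNorm g q₁ (μ.restrict (ball y ρ)) ≤
        C * (A + ε) * eLpNorm f p₁ (translatedDensity μ w y) := by
  obtain ⟨C₁, hC₁⟩ := exists_eLpNorm_restrict_ball_le_add_const (μ := μ) hq₁ hq hq₀ ρ
  obtain ⟨C₂, hC₂⟩ :=
    exists_eLpNorm_restrict_ball_le_translatedDensity (μ := μ) (E := E) hp₀ hp hδ₀ hδ
  obtain ⟨C₃, hC₃⟩ :=
    exists_eLpNorm_le_eLpNorm_of_measure_univ_le (α := V) (E := E) one_ne_zero hp₁ hw_int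
  refine ⟨C₁ * (C₂ + C₃), fun A ε f g h y hf hg hh hle hA => ?_⟩
  set U := eLpNorm f p₁ (translatedDensity μ w y)
  calc eLpNorm g q₁ (μ.restrict (ball y ρ))
      ≤ C₁ * (eLpNorm h q₀ μ + ε * eLpNorm f 1 (translatedDensity μ w y)) :=
        hC₁ y g h _ hg hh hle
    _ ≤ C₁ * (A * (C₂ * U) + ε * (C₃ * U)) := by
        gcongr
        · exact hA.trans (by gcongr; exact hC₂ f y hf)
        · exact hC₃ _ f (translatedDensity_univ y).le (hf.mono_measure (translatedDensity_le hw₁ y))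
    _ ≤ C₁ * (A * ((C₂ + C₃) * U) + ε * ((C₂ + C₃) * U)) := by
        gcongr
        exacts [le_self_add, le_add_self]
    _ = (C₁ * (C₂ + C₃) : ℝ≥0) * (A + ε) * U := by push_cast; ring

theorem exists_eLpNorm_le_of_localized (hp₀ : p₀ ≠ 0) (hp : p₀ ≤ p₁) (hp₁ : 1 ≤ p₁)
    (hpq : p₁ ≤ q₁) (hq : q₁ ≤ q₀) (hw : Measurable w) (hw₁ : ∀ v, w v ≤ 1)
    (hw_int : ∫⁻ v, w v ∂μ ≠ ∞) (hδ₀ : δ ≠ 0) (hδ : ∀ v ∈ ball (0 : V) R, δ ≤ w v) (hρ : 0 < ρ) :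
    ∃ C : ℝ≥0, ∀ (A ε : ℝ≥0) (f : V → E) (g : V → ℝ≥0∞) (h : V → V → ℝ≥0∞),
      MemLp f p₁ μ → AEMeasurable g μ → (∀ y, AEMeasurable (h y) μ) →
      (∀ y, ∀ x ∈ ball y ρ, g x ≤ h y x + ε * eLpNorm f 1 (translatedDensity μ w y)) →
      (∀ y, eLpNorm (h y) q₀ μ ≤ A * eLpNorm f p₀ (μ.restrict (ball y R))) →
      eLpNorm g q₁ μ ≤ C * (A + ε) * eLpNorm f p₁ μ := by
  have hq₁ : 1 ≤ q₁ := hp₁.trans hpq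
  have hq₁' : q₁ ≠ 0 := (one_pos.trans_le hq₁).ne'
  obtain ⟨C, hC⟩ := exists_eLpNorm_restrict_ball_le_of_localized (μ := μ) (E := E) hp₀ hp hp₁
    hq₁' hq (hq₁.trans hq) hw₁ hw_int hδ₀ hδ ρ
  set M := (μ (ball 0 ρ))⁻¹ ^ (1 / q₁.toReal)
  set W := (∫⁻ v, w v ∂μ) ^ (1 / q₁.toReal)
  have hM : M ≠ ∞ := ENNReal.rpow_ne_top_of_nonneg (by positivity)
    (ENNReal.inv_ne_top.2 (measure_ball_pos μ 0 hρ).ne')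
  have hW : W ≠ ∞ := ENNReal.rpow_ne_top_of_nonneg (by positivity) hw_int
  refine ⟨M.toNNReal * C * W.toNNReal, fun A ε f g h hf hg hh hle hA => ?_⟩
  set U := fun y => eLpNorm f p₁ (translatedDensity μ w y)
  have hlocal (y : V) : eLpNorm g q₁ (μ.restrict (ball y ρ)) ≤ (C * (A + ε) : ℝ≥0) * U y := by
    exact_mod_cast hC A ε f g (h y) y hf.1 hg (hh y) (hle y) (hA y)
  calc eLpNorm g q₁ μ
      ≤ M * eLpNorm (fun y => (C * (A + ε) : ℝ≥0) * U y) q₁ μ :=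
        eLpNorm_le_of_forall_restrict_ball_le hq₁' hρ hg hlocal
    _ ≤ M * ((C * (A + ε) : ℝ≥0) * eLpNorm U q₁ μ) := by
        gcongr
        exact eLpNorm_le_nnreal_smul_eLpNorm_of_ae_le_mul' (.of_forall fun y => le_rfl) q₁
    _ ≤ M * ((C * (A + ε) : ℝ≥0) * (W * eLpNorm f p₁ μ)) := by
        gcongr
        exact eLpNorm_eLpNorm_translatedDensity_le hw hw₁ (one_pos.trans_le hp₁).ne' hpq hf
    _ = (M.toNNReal * C * W.toNNReal : ℝ≥0) * (A + ε) * eLpNorm f p₁ μ := by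
        push_cast
        rw [ENNReal.coe_toNNReal hM, ENNReal.coe_toNNReal hW]
        ring

end Localization

lemma lowerSemicontinuous_eLpNorm {X α E : Type*} [TopologicalSpace X] [FirstCountableTopology X]
    [MeasurableSpace α] [NormedAddCommGroup E] {ν : Measure α} {F : X → α → E}
    (hF : ∀ x, AEStronglyMeasurable (F x) ν) (hF_cont : ∀ a, Continuous fun x => F x a)
    (p : ℝ≥0∞) : LowerSemicontinuous fun x => eLpNorm (F x) p ν := by
  intro x c hc
  by_contra hfreq
  obtain ⟨u, hu, hu_le⟩ := Filter.exists_seq_forall_of_frequently (Filter.not_eventually.1 hfreq)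
  refine hc.not_ge ?_
  calc eLpNorm (F x) p ν
      ≤ Filter.liminf (fun n => eLpNorm (F (u n)) p ν) Filter.atTop :=
        Lp.eLpNorm_lim_le_liminf_eLpNorm (fun n => hF (u n)) _
          (.of_forall fun a => ((hF_cont a).tendsto x).comp hu)
    _ ≤ c := by
        refine (Filter.liminf_le_liminf (.of_forall fun n => not_lt.1 (hu_le n))).trans_eq ?_
        exact Filter.liminf_const c

open scoped SchwartzMap Convolution

section FourierMultiplier

open ContinuousLinearMap

lemma bddAbove_range_norm_schwartzMap {E F : Type*} [NormedAddCommGroup E] [NormedSpace ℝ E]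
    [NormedAddCommGroup F] [NormedSpace ℝ F] (K : 𝓢(E, F)) : BddAbove (range fun v => ‖K v‖) :=
  ⟨SchwartzMap.seminorm ℝ 0 0 K, forall_mem_range.2 (SchwartzMap.norm_le_seminorm ℝ K)⟩

variable {V : Type*} [NormedAddCommGroup V] [InnerProductSpace ℝ V] [FiniteDimensional ℝ V]
  [MeasurableSpace V] [BorelSpace V] {f : V → ℂ}

lemma continuous_convolution_schwartzMap (hf : Integrable f) (K : 𝓢(V, ℂ)) :
    Continuous (f ⋆[mul ℂ ℂ] K) :=
  (bddAbove_range_norm_schwartzMap K).continuous_convolution_right_of_integrable _ hf K.continuous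

lemma convolutionExists_schwartzMap (hf : Integrable f) (K : 𝓢(V, ℂ)) :
    ConvolutionExists f K (mul ℂ ℂ) volume := fun _ =>
  BddAbove.convolutionExistsAt (s := univ) _
    ((bddAbove_range_norm_schwartzMap K).mono (image_subset_range _ _)) .univ (subset_univ _)
    hf.integrableOn K.continuous.aestronglyMeasurable

lemma norm_convolution_schwartzMap_le (hf : Integrable f) (K : 𝓢(V, ℂ)) (v : V) :
    ‖(f ⋆[mul ℂ ℂ] K) v‖ ≤ (∫ z, ‖f z‖) * SchwartzMap.seminorm ℝ 0 0 K := by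
  rw [convolution_mul, ← integral_mul_const]
  refine norm_integral_le_of_norm_le (hf.norm.mul_const _) (.of_forall fun z => ?_)
  rw [norm_mul]
  gcongr
  exact SchwartzMap.norm_le_seminorm ℝ K _

lemma fourierInv_mul_fourier_eq_convolution (m : 𝓢(V, ℂ)) (hf : Integrable f) :
    𝓕⁻ (fun ξ => m ξ * 𝓕 f ξ) = f ⋆[mul ℂ ℂ] (𝓕⁻ m : 𝓢(V, ℂ)) := by
  set K : 𝓢(V, ℂ) := 𝓕⁻ m
  have hfourier : 𝓕 (f ⋆[mul ℂ ℂ] K) = fun ξ => m ξ * 𝓕 f ξ := by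
    ext ξ
    rw [Real.fourier_mul_convolution_eq hf K.integrable, ← SchwartzMap.fourier_coe,
      FourierTransform.fourier_fourierInv_eq, mul_comm]
  have hint : Integrable fun ξ => m ξ * 𝓕 f ξ := by
    refine m.integrable.mul_bdd (c := ∫ z, ‖f z‖) ?_ (.of_forall fun ξ => ?_)
    · exact (VectorFourier.fourierIntegral_continuous Real.continuous_fourierChar
        (L := innerₗ V) continuous_inner hf).aestronglyMeasurable
    · exact VectorFourier.norm_fourierIntegral_le_integral_norm _ _ _ _ _
  rw [← hfourier] at hint ⊢
  exact (continuous_convolution_schwartzMap hf K).fourierInv_fourier_eq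
    (hf.integrable_convolution _ K.integrable) hint

end FourierMultiplier

lemma fourierInv_comp_inv_smul {V E : Type*} [NormedAddCommGroup V] [InnerProductSpace ℝ V]
    [FiniteDimensional ℝ V] [MeasurableSpace V] [BorelSpace V] [NormedAddCommGroup E]
    [NormedSpace ℂ E] (φ : V → E) {a : ℝ} (ha : 0 < a) (v : V) :
    𝓕⁻ (fun ξ => φ (a⁻¹ • ξ)) v = a ^ Module.finrank ℝ V • 𝓕⁻ φ (a • v) := by
  have hsubst := Measure.integral_comp_smul (volume : Measure V)
    (fun ξ => Real.fourierChar (inner ℝ ξ (a • v)) • φ ξ) a⁻¹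
  have hjac : |((a⁻¹) ^ Module.finrank ℝ V)⁻¹| = a ^ Module.finrank ℝ V := by
    rw [inv_pow, inv_inv, abs_of_pos (pow_pos ha _)]
  rw [Real.fourierInv_eq, Real.fourierInv_eq, ← hjac, ← hsubst]
  simp only [inner_smul_left, inner_smul_right, conj_trivial, mul_inv_cancel_left₀ ha.ne']

lemma exists_pow_mul_norm_smul_le {V E : Type*} [NormedAddCommGroup V] [NormedSpace ℝ V]
    [NormedAddCommGroup E] [NormedSpace ℝ E] (ψ : 𝓢(V, E)) (n N k : ℕ) :
    ∃ C : ℝ, 0 ≤ C ∧ ∀ (a : ℝ) (v : V), 1 ≤ a → 1 ≤ ‖v‖ →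
      a ^ n * ‖ψ (a • v)‖ ≤ C * (a ^ N)⁻¹ * (‖v‖ ^ k)⁻¹ := by
  obtain ⟨C, hC₀, hC⟩ := ψ.decay (n + N + k) 0
  refine ⟨C, hC₀.le, fun a v ha hv => ?_⟩
  have ha₀ : 0 < a := one_pos.trans_le ha
  have : 0 < ‖v‖ := one_pos.trans_le hv
  rw [mul_assoc, ← mul_inv, ← div_eq_mul_inv, le_div_iff₀ (by positivity)]
  calc a ^ n * ‖ψ (a • v)‖ * (a ^ N * ‖v‖ ^ k)
      = a ^ (n + N) * ‖v‖ ^ k * ‖ψ (a • v)‖ := by ring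
    _ ≤ a ^ (n + N + k) * ‖v‖ ^ (n + N + k) * ‖ψ (a • v)‖ := by
        gcongr ?_ * ?_ * _
        · exact pow_le_pow_right₀ ha (by omega)
        · exact pow_le_pow_right₀ hv (by omega)
    _ = ‖a • v‖ ^ (n + N + k) * ‖iteratedFDeriv ℝ 0 ψ (a • v)‖ := by
        rw [norm_smul, Real.norm_of_nonneg ha₀.le, mul_pow, norm_iteratedFDeriv_zero]
    _ ≤ C := hC _

section FrequencyKernel

variable {β₀ : ℝ → ℝ}

lemma contDiff_bump_norm (V : Type*) [NormedAddCommGroup V] [InnerProductSpace ℝ V]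
    (hβ : IsBump β₀) : ContDiff ℝ (⊤ : ℕ∞) fun ξ : V => (β₀ ‖ξ‖ : ℂ) := by
  refine Complex.ofRealCLM.contDiff.comp (contDiff_iff_contDiffAt.2 fun ξ => ?_)
  obtain rfl | hξ := eq_or_ne ξ 0
  · have hone : (fun ξ : V => β₀ ‖ξ‖) =ᶠ[nhds 0] fun _ => 1 := by
      filter_upwards [ball_mem_nhds (0 : V) one_half_pos] with ξ hξ
      exact hβ.2.1 _ (by simpa using hξ)
    exact contDiffAt_const.congr_of_eventuallyEq hone
  · exact hβ.1.contDiffAt.comp ξ (contDiffAt_norm ℝ hξ)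

lemma hasCompactSupport_bump_norm (V : Type*) [NormedAddCommGroup V] [ProperSpace V]
    (hβ : IsBump β₀) : HasCompactSupport fun ξ : V => (β₀ ‖ξ‖ : ℂ) := by
  refine .intro (isCompact_closedBall (0 : V) 1) fun ξ hξ => ?_
  rw [hβ.2.2 _ (by simpa using hξ), Complex.ofReal_zero]

/-- The Schwartz function `ξ ↦ β₀(2^{-j} |ξ|)`. -/
def dilatedBump (hβ : IsBump β₀) (d j : ℕ) : 𝓢(Euc d, ℂ) :=
  SchwartzMap.compCLMOfContinuousLinearEquiv ℂ
    (ContinuousLinearEquiv.smulLeft (Units.mk0 ((2 : ℝ) ^ j)⁻¹ (by positivity)))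
    ((hasCompactSupport_bump_norm (Euc d) hβ).toSchwartzMap (contDiff_bump_norm (Euc d) hβ))

variable (hβ : IsBump β₀) (d : ℕ)

@[simp]
lemma dilatedBump_apply (j : ℕ) (ξ : Euc d) :
    dilatedBump hβ d j ξ = β₀ ‖((2 : ℝ) ^ j)⁻¹ • ξ‖ := rfl

/-- The symbol `ξ ↦ β_j(|ξ|)` as a Schwartz function. -/
def freqSymbol : ℕ → 𝓢(Euc d, ℂ)
  | 0 => dilatedBump hβ d 0
  | j + 1 => dilatedBump hβ d (j + 1) - dilatedBump hβ d j

lemma freqSymbol_apply (j : ℕ) (ξ : Euc d) : freqSymbol hβ d j ξ = betaJ β₀ j ‖ξ‖ := by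
  cases j with
  | zero => simp [freqSymbol, betaJ]
  | succ j =>
    have hpow (k : ℕ) : (2 : ℝ) ^ (-(k : ℤ)) = (2 ^ k)⁻¹ := by rw [zpow_neg, zpow_natCast]
    have hnorm (k : ℕ) : ‖((2 : ℝ) ^ k)⁻¹ • ξ‖ = (2 ^ k)⁻¹ * ‖ξ‖ := by
      rw [norm_smul, Real.norm_of_nonneg (by positivity)]
    simp only [freqSymbol, betaJ, sub_apply, dilatedBump_apply, hnorm,
      ← Nat.cast_succ, hpow, Complex.ofReal_sub]

/-- The convolution kernel of `L_j`. -/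
def freqKernel (j : ℕ) : 𝓢(Euc d, ℂ) := 𝓕⁻ (freqSymbol hβ d j)

lemma freqLoc_eq_convolution {d : ℕ} (j : ℕ) {f : Euc d → ℂ} (hf : Integrable f) :
    freqLoc d β₀ j f = f ⋆[ContinuousLinearMap.mul ℂ ℂ] freqKernel hβ d j := by
  rw [freqKernel, ← fourierInv_mul_fourier_eq_convolution _ hf]
  simp only [freqLoc, freqSymbol_apply]

lemma fourierInv_dilatedBump (j : ℕ) (v : Euc d) :
    (𝓕⁻ (dilatedBump hβ d j) : 𝓢(Euc d, ℂ)) v =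
      ((2 : ℝ) ^ j) ^ d • (𝓕⁻ (dilatedBump hβ d 0) : 𝓢(Euc d, ℂ)) ((2 : ℝ) ^ j • v) := by
  have hdilate : ⇑(dilatedBump hβ d j) = fun ξ => dilatedBump hβ d 0 (((2 : ℝ) ^ j)⁻¹ • ξ) := by
    ext ξ
    simp only [dilatedBump_apply, pow_zero, inv_one, one_smul]
  rw [SchwartzMap.fourierInv_coe, hdilate, fourierInv_comp_inv_smul _ (by positivity),
    finrank_euclideanSpace_fin, SchwartzMap.fourierInv_coe]

lemma exists_norm_fourierInv_dilatedBump_le (N : ℕ) :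
    ∃ C : ℝ, 0 ≤ C ∧ ∀ (j : ℕ) (v : Euc d), 1 ≤ ‖v‖ →
      ‖(𝓕⁻ (dilatedBump hβ d j) : 𝓢(Euc d, ℂ)) v‖ ≤
        C * (((2 : ℝ) ^ j) ^ N)⁻¹ * (‖v‖ ^ (d + 1))⁻¹ := by
  obtain ⟨C, hC₀, hC⟩ :=
    exists_pow_mul_norm_smul_le (𝓕⁻ (dilatedBump hβ d 0) : 𝓢(Euc d, ℂ)) d N (d + 1)
  refine ⟨C, hC₀, fun j v hv => ?_⟩
  rw [fourierInv_dilatedBump, norm_smul, Real.norm_of_nonneg (by positivity)]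
  exact hC _ v (one_le_pow₀ one_le_two) hv

lemma exists_norm_freqKernel_le (N : ℕ) :
    ∃ C : ℝ, 0 ≤ C ∧ ∀ (j : ℕ) (v : Euc d), 1 ≤ ‖v‖ →
      ‖freqKernel hβ d j v‖ ≤ C * (((2 : ℝ) ^ j) ^ N)⁻¹ * (‖v‖ ^ (d + 1))⁻¹ := by
  obtain ⟨C, hC₀, hC⟩ := exists_norm_fourierInv_dilatedBump_le hβ d N
  refine ⟨C * (1 + 2 ^ N), by positivity, fun j v hv => ?_⟩
  cases j with
  | zero =>
    refine (hC 0 v hv).trans ?_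
    gcongr
    exact le_mul_of_one_le_right hC₀ (le_add_of_nonneg_right (by positivity))
  | succ j =>
    have hsub : freqKernel hβ d (j + 1) =
        𝓕⁻ (dilatedBump hβ d (j + 1)) - 𝓕⁻ (dilatedBump hβ d j) :=
      map_sub (FourierTransform.fourierInvCLM ℂ 𝓢(Euc d, ℂ)) _ _
    rw [hsub, sub_apply]
    refine (norm_sub_le _ _).trans ((add_le_add (hC (j + 1) v hv) (hC j v hv)).trans_eq ?_)
    rw [pow_succ (2 : ℝ) j, mul_pow]
    field_simp

end FrequencyKernel

section SphericalAverage

variable {d : ℕ} {f : Euc d → ℂ}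

lemma sphereMeasure_univ_le (d : ℕ) : sphereMeasure d univ ≤ 1 := by
  rw [sphereMeasure, Measure.smul_apply, Measure.map_apply measurable_subtype_coe .univ,
    preimage_univ, smul_eq_mul]
  exact ENNReal.inv_mul_le_one _

instance (d : ℕ) : IsFiniteMeasure (sphereMeasure d) :=
  ⟨(sphereMeasure_univ_le d).trans_lt ENNReal.one_lt_top⟩

lemma ae_norm_eq_one_sphereMeasure (d : ℕ) : ∀ᵐ ω ∂sphereMeasure d, ‖ω‖ = 1 := by
  refine Measure.ae_smul_measure ?_ _
  rw [ae_map_iff (by fun_prop) (measurableSet_eq_fun (by fun_prop) (by fun_prop))]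
  exact .of_forall fun ω => norm_eq_of_mem_sphere ω

lemma enorm_sphAvg_le {B : ℝ≥0∞} {t : ℝ} {x : Euc d}
    (hB : ∀ ω, ‖ω‖ = 1 → ‖f (x - t • ω)‖ₑ ≤ B) : ‖sphAvg f t x‖ₑ ≤ B := by
  calc ‖sphAvg f t x‖ₑ ≤ ∫⁻ ω, ‖f (x - t • ω)‖ₑ ∂sphereMeasure d :=
        enorm_integral_le_lintegral_enorm _
    _ ≤ ∫⁻ _, B ∂sphereMeasure d :=
        lintegral_mono_ae ((ae_norm_eq_one_sphereMeasure d).mono hB)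
    _ ≤ B := by
        rw [lintegral_const]
        exact mul_le_of_le_one_right' (sphereMeasure_univ_le d)

lemma continuous_sphAvg {C : ℝ} (hf : Continuous f) (hC : ∀ v, ‖f v‖ ≤ C) :
    Continuous fun z : Euc d × ℝ => sphAvg f z.2 z.1 :=
  continuous_of_dominated (bound := fun _ => C) (fun _ => by fun_prop)
    (fun _ => .of_forall fun _ => hC _) (integrable_const C) (.of_forall fun _ => by fun_prop)

lemma integrable_sphereMeasure {C : ℝ} (hf : Continuous f) (hC : ∀ v, ‖f v‖ ≤ C) (t : ℝ)
    (x : Euc d) : Integrable (fun ω => f (x - t • ω)) (sphereMeasure d) :=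
  .of_bound (by fun_prop) C (.of_forall fun _ => hC _)

end SphericalAverage

section LocalizedAverage

variable {d : ℕ} {χ β₀ : ℝ → ℝ} {f g : Euc d → ℂ}

lemma continuous_freqLoc (hβ : IsBump β₀) (j : ℕ) (hf : Integrable f) :
    Continuous (freqLoc d β₀ j f) := by
  rw [freqLoc_eq_convolution hβ j hf]
  exact continuous_convolution_schwartzMap hf _

lemma exists_norm_freqLoc_le (hβ : IsBump β₀) (j : ℕ) (hf : Integrable f) :
    ∃ C : ℝ, ∀ v, ‖freqLoc d β₀ j f v‖ ≤ C := by
  rw [freqLoc_eq_convolution hβ j hf]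
  exact ⟨_, norm_convolution_schwartzMap_le hf _⟩

lemma freqLoc_add (hβ : IsBump β₀) (j : ℕ) (hf : Integrable f) (hg : Integrable g) :
    freqLoc d β₀ j (f + g) = freqLoc d β₀ j f + freqLoc d β₀ j g := by
  rw [freqLoc_eq_convolution hβ j hf, freqLoc_eq_convolution hβ j hg,
    freqLoc_eq_convolution hβ j (hf.add hg)]
  exact (convolutionExists_schwartzMap hf _).add_distrib (convolutionExists_schwartzMap hg _)

lemma continuous_Aj (hχ : Continuous χ) (hβ : IsBump β₀) (j : ℕ) (hf : Integrable f) :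
    Continuous fun z : Euc d × ℝ => Aj d χ β₀ j f z.1 z.2 := by
  obtain ⟨C, hC⟩ := exists_norm_freqLoc_le hβ j hf
  have hA := continuous_sphAvg (continuous_freqLoc hβ j hf) hC
  unfold Aj
  fun_prop

lemma Aj_add (hβ : IsBump β₀) (j : ℕ) (hf : Integrable f) (hg : Integrable g) :
    Aj d χ β₀ j (f + g) = Aj d χ β₀ j f + Aj d χ β₀ j g := by
  obtain ⟨C, hC⟩ := exists_norm_freqLoc_le hβ j hf
  obtain ⟨D, hD⟩ := exists_norm_freqLoc_le hβ j hg
  ext x t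
  simp only [Aj, sphAvg, freqLoc_add hβ j hf hg, Pi.add_apply, ← mul_add]
  rw [integral_add (integrable_sphereMeasure (continuous_freqLoc hβ j hf) hC t x)
    (integrable_sphereMeasure (continuous_freqLoc hβ j hg) hD t x)]

lemma Aj_smul (j : ℕ) (c : ℂ) (f : Euc d → ℂ) : Aj d χ β₀ j (c • f) = c • Aj d χ β₀ j f := by
  have hfreq : freqLoc d β₀ j (c • f) = c • freqLoc d β₀ j f := by
    ext v
    simp only [freqLoc, Real.fourierInv_eq, Real.fourier_eq, Pi.smul_apply,
      Circle.smul_def, smul_eq_mul, mul_left_comm _ c, integral_const_mul]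
  ext x t
  simp only [Aj, sphAvg, hfreq, Pi.smul_apply, integral_smul, mul_smul_comm]

lemma Aj_eq_zero_of_fourier_eq_zero (j : ℕ) (hf : 𝓕 f = 0) : Aj d χ β₀ j f = 0 := by
  ext x t
  simp only [Aj, sphAvg, freqLoc, hf, Pi.zero_apply, mul_zero, Real.fourierInv_eq, smul_zero,
    integral_zero]

-- `𝓕 f` is the Bochner integral, with junk value `0` when `f` is not integrable.
lemma Aj_of_not_integrable (j : ℕ) (hf : ¬Integrable f) : Aj d χ β₀ j f = 0 := by
  refine Aj_eq_zero_of_fourier_eq_zero j (funext fun ξ => ?_)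
  rw [Real.fourier_eq]
  exact integral_undef fun h => hf ((Real.fourierIntegral_convergent_iff ξ).1 h)

lemma Aj_of_ae_eq_zero (j : ℕ) (hf : f =ᵐ[volume] 0) : Aj d χ β₀ j f = 0 := by
  refine Aj_eq_zero_of_fourier_eq_zero j (funext fun ξ => ?_)
  simp only [Real.fourier_congr_ae hf, Real.fourier_eq, Pi.zero_apply, smul_zero, integral_zero]

lemma mixedNorm_Aj_le_AjOpNorm (χ β₀ : ℝ → ℝ) (j : ℕ) {p q r : ℝ≥0∞}
    (hf : eLpNorm f p volume ≤ 1) : mixedNorm d q r (Aj d χ β₀ j f) ≤ AjOpNorm d χ β₀ j p q r :=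
  le_iSup₂ (f := fun f (_ : eLpNorm f p volume ≤ 1) => mixedNorm d q r (Aj d χ β₀ j f)) f hf

lemma mixedNorm_Aj_le (χ β₀ : ℝ → ℝ) (j : ℕ) {p q r : ℝ≥0∞} (hp : p ≠ 0) (hq : q ≠ 0) (hr : r ≠ 0)
    (hf : MemLp f p) :
    mixedNorm d q r (Aj d χ β₀ j f) ≤ AjOpNorm d χ β₀ j p q r * eLpNorm f p := by
  obtain hf₀ | hf₀ := eq_or_ne (eLpNorm f p) 0
  · rw [Aj_of_ae_eq_zero j ((eLpNorm_eq_zero_iff hf.1 hp).1 hf₀), mixedNorm_zero hq hr]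
    exact zero_le
  obtain ⟨c, hc⟩ : ∃ c : ℂ, ‖c‖ₑ = eLpNorm f p := by
    refine ⟨(eLpNorm f p).toReal, ?_⟩
    rw [← ofReal_norm, Complex.norm_real, Real.norm_of_nonneg ENNReal.toReal_nonneg,
      ENNReal.ofReal_toReal hf.2.ne]
  have hc₀ : c ≠ 0 := by
    rw [← enorm_ne_zero, hc]
    exact hf₀
  have hunit : eLpNorm (c⁻¹ • f) p ≤ 1 := by
    rw [eLpNorm_const_smul, enorm_inv hc₀, hc]
    exact ENNReal.inv_mul_le_one _
  have hscale : Aj d χ β₀ j f = c • Aj d χ β₀ j (c⁻¹ • f) := by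
    rw [← Aj_smul, smul_inv_smul₀ hc₀]
  rw [hscale, ← hc, mul_comm]
  exact (mixedNorm_const_smul_le hq hr c _).trans
    (mul_le_mul_right (mixedNorm_Aj_le_AjOpNorm χ β₀ j hunit) _)

end LocalizedAverage

section FarEstimate

/-- The weight `(1 + ‖v‖)^{-(d+1)}`, integrable on `ℝ^d`, in which the tails of the kernels of `L_j`
are measured. -/
def decayWeight (d : ℕ) (v : Euc d) : ℝ≥0∞ := ENNReal.ofReal ((1 + ‖v‖) ^ (-(d + 1 : ℝ)))

lemma measurable_decayWeight (d : ℕ) : Measurable (decayWeight d) := by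
  unfold decayWeight
  fun_prop

lemma decayWeight_le_one {d : ℕ} (v : Euc d) : decayWeight d v ≤ 1 :=
  ENNReal.ofReal_le_one.2 <| Real.rpow_le_one_of_one_le_of_nonpos
    (le_add_of_nonneg_right (norm_nonneg v)) (by linarith [d.cast_nonneg (α := ℝ)])

lemma lintegral_decayWeight_ne_top (d : ℕ) : ∫⁻ v, decayWeight d v ≠ ∞ :=
  (finite_integral_one_add_norm (by simp)).ne

lemma exists_le_decayWeight (d : ℕ) (R : ℝ) :
    ∃ δ : ℝ≥0, δ ≠ 0 ∧ ∀ v ∈ ball (0 : Euc d) R, (δ : ℝ≥0∞) ≤ decayWeight d v := by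
  have hbase : (0 : ℝ) < 1 + |R| := by positivity
  refine ⟨((1 + |R|) ^ (-(d + 1 : ℝ))).toNNReal,
    (Real.toNNReal_pos.2 (Real.rpow_pos_of_pos hbase _)).ne', fun v hv => ?_⟩
  refine ENNReal.ofReal_le_ofReal (Real.rpow_le_rpow_of_nonpos (by positivity) ?_
    (by linarith [d.cast_nonneg (α := ℝ)]))
  linarith [mem_ball_zero_iff.1 hv, le_abs_self R]

lemma one_add_dist_le_mul_dist_of_far {X : Type*} [PseudoMetricSpace X] {a : ℝ} {v y z : X}
    (hv : dist v y ≤ a) (hz : a + 1 ≤ dist y z) :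
    1 ≤ dist v z ∧ 1 + dist y z ≤ (a + 2) * dist v z := by
  have htri : dist y z ≤ a + dist v z :=
    (dist_triangle_left y z v).trans (by gcongr)
  have ha : 0 ≤ a := dist_nonneg.trans hv
  constructor <;> nlinarith

variable {χ β₀ : ℝ → ℝ}

lemma exists_enorm_freqKernel_le_of_far (hβ : IsBump β₀) (d N : ℕ) (a : ℝ) :
    ∃ C : ℝ≥0, ∀ (j : ℕ) (v y z : Euc d), dist v y ≤ a → a + 1 ≤ dist y z →
      ‖freqKernel hβ d j (v - z)‖ₑ ≤
        C * (2 : ℝ≥0∞) ^ (-((N : ℝ) * j)) * decayWeight d (y - z) := by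
  obtain ⟨C, hC₀, hC⟩ := exists_norm_freqKernel_le hβ d N
  refine ⟨(C * (a + 2) ^ (d + 1)).toNNReal, fun j v y z hv hz => ?_⟩
  have ha : 0 ≤ a := dist_nonneg.trans hv
  obtain ⟨hone, hdist⟩ := one_add_dist_le_mul_dist_of_far hv hz
  rw [dist_eq_norm, dist_eq_norm] at hdist
  rw [dist_eq_norm] at hone
  have hfar : ‖freqKernel hβ d j (v - z)‖ ≤
      C * (a + 2) ^ (d + 1) * 2 ^ (-((N : ℝ) * j)) * (1 + ‖y - z‖) ^ (-(d + 1 : ℝ)) := by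
    calc ‖freqKernel hβ d j (v - z)‖
        ≤ C * ((2 ^ j) ^ N)⁻¹ * (‖v - z‖ ^ (d + 1))⁻¹ := hC j _ hone
      _ ≤ C * ((2 ^ j) ^ N)⁻¹ * (((1 + ‖y - z‖) / (a + 2)) ^ (d + 1))⁻¹ := by
          gcongr
          exact (div_le_iff₀' (by positivity)).2 hdist
      _ = C * (a + 2) ^ (d + 1) * (2 ^ (N * j))⁻¹ * ((1 + ‖y - z‖) ^ (d + 1))⁻¹ := by
          rw [← pow_mul, mul_comm j, div_pow]
          field_simp
      _ = _ := by
          rw [Real.rpow_neg two_pos.le, Real.rpow_neg (by positivity)]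
          norm_cast
  rw [← ofReal_norm]
  refine (ENNReal.ofReal_le_ofReal hfar).trans_eq ?_
  rw [ENNReal.ofReal_mul (by positivity), ENNReal.ofReal_mul (by positivity), decayWeight,
    ← ENNReal.ofReal_rpow_of_pos two_pos, ENNReal.ofReal_ofNat, ENNReal.ofReal]

lemma exists_enorm_freqLoc_le_of_far (hβ : IsBump β₀) (d N : ℕ) (a : ℝ) :
    ∃ C : ℝ≥0, ∀ (j : ℕ) (f : Euc d → ℂ) (v y : Euc d), Integrable f →
      (∀ z ∈ ball y (a + 1), f z = 0) → dist v y ≤ a →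
      ‖freqLoc d β₀ j f v‖ₑ ≤ C * (2 : ℝ≥0∞) ^ (-((N : ℝ) * j)) *
        eLpNorm f 1 (translatedDensity volume (decayWeight d) y) := by
  obtain ⟨C, hC⟩ := exists_enorm_freqKernel_le_of_far hβ d N a
  refine ⟨C, fun j f v y hf hfy hv => ?_⟩
  set ε : ℝ≥0∞ := C * 2 ^ (-((N : ℝ) * j))
  have hε : ε ≠ ∞ := ENNReal.mul_ne_top ENNReal.coe_ne_top
    (ENNReal.rpow_ne_top_of_ne_zero two_ne_zero ENNReal.ofNat_ne_top)
  have hw : Measurable fun z => decayWeight d (y - z) :=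
    (measurable_decayWeight d).comp (measurable_const.sub measurable_id)
  have hpoint (z : Euc d) :
      ‖f z * freqKernel hβ d j (v - z)‖ₑ ≤ ε * (decayWeight d (y - z) * ‖f z‖ₑ) := by
    by_cases hz : z ∈ ball y (a + 1)
    · simp only [hfy z hz, zero_mul, enorm_zero, zero_le]
    · rw [enorm_mul, mul_comm, ← mul_assoc]
      gcongr
      exact hC j v y z hv (by simpa [dist_comm] using hz)
  calc ‖freqLoc d β₀ j f v‖ₑ
      = ‖∫ z, f z * freqKernel hβ d j (v - z)‖ₑ := by
        rw [freqLoc_eq_convolution hβ j hf, convolution_mul]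
    _ ≤ ∫⁻ z, ε * (decayWeight d (y - z) * ‖f z‖ₑ) :=
        (enorm_integral_le_lintegral_enorm _).trans (lintegral_mono hpoint)
    _ = ε * eLpNorm f 1 (translatedDensity volume (decayWeight d) y) := by
        rw [lintegral_const_mul' _ _ hε, eLpNorm_one_eq_lintegral_enorm, translatedDensity,
          lintegral_withDensity_eq_lintegral_mul₀ hw.aemeasurable hf.1.enorm]
        rfl

lemma exists_enorm_Aj_le_of_far (hβ : IsBump β₀) (d N : ℕ) {T : ℝ}
    (hχ : Function.support χ ⊆ closedBall 0 T) :
    ∃ C : ℝ≥0, ∀ (j : ℕ) (f : Euc d → ℂ) (x y : Euc d) (t : ℝ), Integrable f →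
      (∀ z ∈ ball y (T + 2), f z = 0) → x ∈ ball y 1 →
      ‖Aj d χ β₀ j f x t‖ₑ ≤ C * (2 : ℝ≥0∞) ^ (-((N : ℝ) * j)) *
        eLpNorm f 1 (translatedDensity volume (decayWeight d) y) * ‖χ t‖ₑ := by
  obtain ⟨C, hC⟩ := exists_enorm_freqLoc_le_of_far hβ d N (T + 1)
  refine ⟨C, fun j f x y t hf hfy hx => ?_⟩
  obtain ht | ht := eq_or_ne (χ t) 0
  · simp only [Aj, ht, Complex.ofReal_zero, zero_mul, enorm_zero, zero_le]
  have htT : ‖t‖ ≤ T := mem_closedBall_zero_iff.1 (hχ ht)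
  have hnorm : ‖(χ t : ℂ)‖ₑ = ‖χ t‖ₑ := by rw [← ofReal_norm, Complex.norm_real, ofReal_norm]
  rw [Aj, enorm_mul, mul_comm, hnorm]
  gcongr
  refine enorm_sphAvg_le fun ω hω =>
    hC j f _ y hf (fun z hz => hfy z (by convert hz using 2; ring)) ?_
  calc dist (x - t • ω) y ≤ dist (x - t • ω) x + dist x y := dist_triangle _ _ _
    _ ≤ T + 1 := by
        gcongr
        · simpa [norm_smul, hω] using htT
        · exact (mem_ball.1 hx).le

end FarEstimate

section LocalizedBounds

variable {d : ℕ} {χ β₀ : ℝ → ℝ} {f : Euc d → ℂ} {p q r r₀ r₁ p₀ p₁ q₀ q₁ : ℝ≥0∞}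

lemma aestronglyMeasurable_Aj (hχ : Continuous χ) (hβ : IsBump β₀) (j : ℕ) (hf : Integrable f)
    (x : Euc d) : AEStronglyMeasurable (Aj d χ β₀ j f x) :=
  ((continuous_Aj hχ hβ j hf).comp (.prodMk_right x)).aestronglyMeasurable

lemma measurable_eLpNorm_Aj (hχ : Continuous χ) (hβ : IsBump β₀) (j : ℕ) (hf : Integrable f)
    (r : ℝ≥0∞) : Measurable fun x => eLpNorm (Aj d χ β₀ j f x) r :=
  (lowerSemicontinuous_eLpNorm (aestronglyMeasurable_Aj hχ hβ j hf)
    (fun t => (continuous_Aj hχ hβ j hf).comp (.prodMk_left t)) r).measurable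

lemma exists_eLpNorm_Aj_le_of_far (hβ : IsBump β₀) (d N : ℕ) {T : ℝ}
    (hχ : Continuous χ) (hχT : Function.support χ ⊆ closedBall 0 T) (r : ℝ≥0∞) :
    ∃ C : ℝ≥0, ∀ (j : ℕ) (f : Euc d → ℂ) (x y : Euc d), Integrable f →
      (∀ z ∈ ball y (T + 2), f z = 0) → x ∈ ball y 1 →
      eLpNorm (Aj d χ β₀ j f x) r ≤ C * (2 : ℝ≥0∞) ^ (-((N : ℝ) * j)) *
        eLpNorm f 1 (translatedDensity volume (decayWeight d) y) := by
  obtain ⟨C, hC⟩ := exists_enorm_Aj_le_of_far hβ d N hχT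
  have hχr : MemLp χ r := hχ.memLp_of_hasCompactSupport
    (.of_support_subset_isCompact (isCompact_closedBall 0 T) hχT)
  refine ⟨C * (eLpNorm χ r).toNNReal, fun j f x y hf hfy hx => ?_⟩
  set B := C * (2 : ℝ≥0∞) ^ (-((N : ℝ) * j)) *
    eLpNorm f 1 (translatedDensity volume (decayWeight d) y)
  have hB : B ≠ ∞ := by
    refine ENNReal.mul_ne_top (ENNReal.mul_ne_top ENNReal.coe_ne_top
      (ENNReal.rpow_ne_top_of_ne_zero two_ne_zero ENNReal.ofNat_ne_top)) ?_
    exact (memLp_one_iff_integrable.2 hf).mono_measure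
      (translatedDensity_le decayWeight_le_one y) |>.2.ne
  calc eLpNorm (Aj d χ β₀ j f x) r volume ≤ B.toNNReal • eLpNorm χ r volume :=
        eLpNorm_le_nnreal_smul_eLpNorm_of_ae_le_mul' (.of_forall fun t => by
          rw [ENNReal.coe_toNNReal hB]
          exact hC j f x y t hf hfy hx) r
    _ = _ := by
        rw [ENNReal.smul_def, ENNReal.coe_toNNReal hB, ENNReal.coe_mul,
          ENNReal.coe_toNNReal hχr.2.ne, smul_eq_mul]
        ring

lemma exists_eLpNorm_Aj_le_indicator_ball_add (hβ : IsBump β₀) (d N : ℕ) {T : ℝ}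
    (hχ : Continuous χ) (hχT : Function.support χ ⊆ closedBall 0 T) (r : ℝ≥0∞) :
    ∃ C : ℝ≥0, ∀ (j : ℕ) (f : Euc d → ℂ) (x y : Euc d), Integrable f → x ∈ ball y 1 →
      eLpNorm (Aj d χ β₀ j f x) r ≤
        C * eLpNorm (Aj d χ β₀ j ((ball y (T + 2)).indicator f) x) r +
          C * (2 : ℝ≥0∞) ^ (-((N : ℝ) * j)) *
            eLpNorm f 1 (translatedDensity volume (decayWeight d) y) := by
  obtain ⟨C, hC⟩ := exists_eLpNorm_Aj_le_of_far hβ d N hχ hχT r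
  set K := (ENNReal.LpAddConst r).toNNReal
  have hK : (K : ℝ≥0∞) = ENNReal.LpAddConst r :=
    ENNReal.coe_toNNReal (ENNReal.LpAddConst_lt_top r).ne
  refine ⟨K * (1 + C), fun j f x y hf hx => ?_⟩
  set S := ball y (T + 2)
  set U := eLpNorm f 1 (translatedDensity volume (decayWeight d) y)
  have hnear : Integrable (S.indicator f) := hf.indicator measurableSet_ball
  have hfar : Integrable (Sᶜ.indicator f) := hf.indicator measurableSet_ball.compl
  have hfar_le : eLpNorm (Aj d χ β₀ j (Sᶜ.indicator f) x) r ≤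
      C * (2 : ℝ≥0∞) ^ (-((N : ℝ) * j)) * U := by
    refine (hC j _ x y hfar (fun z hz => indicator_of_notMem (notMem_compl_iff.2 hz) f) hx).trans ?_
    gcongr
    exact eLpNorm_indicator_le f
  calc eLpNorm (Aj d χ β₀ j f x) r volume
      = eLpNorm (Aj d χ β₀ j (S.indicator f) x + Aj d χ β₀ j (Sᶜ.indicator f) x) r volume := by
        rw [← Pi.add_apply, ← Aj_add hβ j hnear hfar, indicator_self_add_compl]
    _ ≤ K * (eLpNorm (Aj d χ β₀ j (S.indicator f) x) r volume +
          eLpNorm (Aj d χ β₀ j (Sᶜ.indicator f) x) r volume) := by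
        rw [hK]
        exact eLpNorm_add_le' (aestronglyMeasurable_Aj hχ hβ j hnear x)
          (aestronglyMeasurable_Aj hχ hβ j hfar x) r
    _ ≤ K * (eLpNorm (Aj d χ β₀ j (S.indicator f) x) r volume +
          C * (2 : ℝ≥0∞) ^ (-((N : ℝ) * j)) * U) := by gcongr
    _ ≤ K * ((1 + C) * eLpNorm (Aj d χ β₀ j (S.indicator f) x) r volume +
          (1 + C) * (2 : ℝ≥0∞) ^ (-((N : ℝ) * j)) * U) := by
        gcongr
        · exact le_mul_of_one_le_left' le_self_add
        · exact le_add_self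
    _ = _ := by
        push_cast
        ring

lemma eLpNorm_eLpNorm_Aj_indicator_le (χ β₀ : ℝ → ℝ) (j : ℕ) (hp₀ : p₀ ≠ 0) (hp : p₀ ≤ p₁)
    (hq : q ≠ 0) (hr : r ≠ 0) (hf : MemLp f p₁) {S : Set (Euc d)} (hS : MeasurableSet S)
    (hSfin : volume S ≠ ∞) :
    eLpNorm (fun x => eLpNorm (Aj d χ β₀ j (S.indicator f) x) r) q ≤
      AjOpNorm d χ β₀ j p₀ q r * eLpNorm f p₀ (volume.restrict S) := by
  have hfS : MemLp (S.indicator f) p₀ := by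
    have := Fact.mk hSfin.lt_top
    exact (memLp_indicator_iff_restrict hS).2 (hf.restrict S |>.mono_exponent hp)
  rw [← mixedNorm_eq_eLpNorm hq hr, ← eLpNorm_indicator_eq_eLpNorm_restrict hS]
  exact mixedNorm_Aj_le χ β₀ j hp₀ hq hr hfS

lemma exists_mixedNorm_Aj_le (hχ : Continuous χ) (hχs : HasCompactSupport χ) (hβ : IsBump β₀)
    (d N : ℕ) (hp₀ : p₀ ≠ 0) (hp : p₀ ≤ p₁) (hp₁ : 1 ≤ p₁) (hpq : p₁ ≤ q₁) (hq : q₁ ≤ q₀)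
    (hr : r ≠ 0) :
    ∃ C : ℝ≥0, ∀ (j : ℕ) (f : Euc d → ℂ), AjOpNorm d χ β₀ j p₀ q₀ r ≠ ∞ → Integrable f →
      MemLp f p₁ → mixedNorm d q₁ r (Aj d χ β₀ j f) ≤
        C * (AjOpNorm d χ β₀ j p₀ q₀ r + (2 : ℝ≥0∞) ^ (-((N : ℝ) * j))) * eLpNorm f p₁ := by
  have hq₁ : q₁ ≠ 0 := (one_pos.trans_le (hp₁.trans hpq)).ne'
  have hq₀ : q₀ ≠ 0 := (hq₁.bot_lt.trans_le hq).ne'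
  obtain ⟨T, hT⟩ := hχs.isCompact.isBounded.subset_closedBall 0
  obtain ⟨K, hK⟩ := exists_eLpNorm_Aj_le_indicator_ball_add hβ d N hχ
    ((subset_tsupport χ).trans hT) r
  obtain ⟨δ, hδ₀, hδ⟩ := exists_le_decayWeight d (T + 2)
  obtain ⟨C, hC⟩ := exists_eLpNorm_le_of_localized (μ := (volume : Measure (Euc d))) (E := ℂ) hp₀ hp
    hp₁ hpq hq (measurable_decayWeight d) decayWeight_le_one (lintegral_decayWeight_ne_top d) hδ₀ hδ
    one_pos
  refine ⟨C * K, fun j f hA hfint hf => ?_⟩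
  set A := AjOpNorm d χ β₀ j p₀ q₀ r
  have hAK : ((K * A.toNNReal : ℝ≥0) : ℝ≥0∞) = K * A := by
    rw [ENNReal.coe_mul, ENNReal.coe_toNNReal hA]
  have hε : ((K * 2 ^ (-((N : ℝ) * j)) : ℝ≥0) : ℝ≥0∞) = K * (2 : ℝ≥0∞) ^ (-((N : ℝ) * j)) := by
    rw [ENNReal.coe_mul, ENNReal.coe_rpow_of_ne_zero two_ne_zero, ENNReal.coe_ofNat]
  have hlocal (y : Euc d) :
      eLpNorm (fun x => K * eLpNorm (Aj d χ β₀ j ((ball y (T + 2)).indicator f) x) r volume) q₀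
        volume ≤ (K * A.toNNReal : ℝ≥0) * eLpNorm f p₀ (volume.restrict (ball y (T + 2))) := by
    calc _ ≤ K * eLpNorm (fun x => eLpNorm (Aj d χ β₀ j ((ball y (T + 2)).indicator f) x) r volume)
          q₀ volume :=
          eLpNorm_le_nnreal_smul_eLpNorm_of_ae_le_mul' (.of_forall fun x => le_rfl) q₀
      _ ≤ K * (A * eLpNorm f p₀ (volume.restrict (ball y (T + 2)))) := by
          gcongr
          exact eLpNorm_eLpNorm_Aj_indicator_le χ β₀ j hp₀ hp hq₀ hr hf measurableSet_ball
            measure_ball_lt_top.ne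
      _ = _ := by rw [hAK, mul_assoc]
  have hbound := hC (K * A.toNNReal) (K * 2 ^ (-((N : ℝ) * j))) f
    (fun x => eLpNorm (Aj d χ β₀ j f x) r volume)
    (fun y x => K * eLpNorm (Aj d χ β₀ j ((ball y (T + 2)).indicator f) x) r volume) hf
    (measurable_eLpNorm_Aj hχ hβ j hfint r).aemeasurable
    (fun y => ((measurable_eLpNorm_Aj hχ hβ j (hfint.indicator measurableSet_ball) r).const_mul
      _).aemeasurable)
    (fun y x hx => hε ▸ hK j f x y hfint hx) hlocal
  rw [hAK, hε, ← mul_add, ← mul_assoc, ← ENNReal.coe_mul] at hbound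
  rwa [mixedNorm_eq_eLpNorm hq₁ hr]

lemma exists_AjOpNorm_le_add (hχ : Continuous χ) (hχs : HasCompactSupport χ) (hβ : IsBump β₀)
    (d N : ℕ) (hp₀ : p₀ ≠ 0) (hp : p₀ ≤ p₁) (hp₁ : 1 ≤ p₁) (hpq : p₁ ≤ q₁) (hq : q₁ ≤ q₀)
    (hr : r ≠ 0) :
    ∃ C : ℝ≥0, ∀ j : ℕ, AjOpNorm d χ β₀ j p₁ q₁ r ≤
      C * (AjOpNorm d χ β₀ j p₀ q₀ r + (2 : ℝ≥0∞) ^ (-((N : ℝ) * j))) := by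
  obtain ⟨C, hC⟩ := exists_mixedNorm_Aj_le hχ hχs hβ d N hp₀ hp hp₁ hpq hq hr
  have hq₁ : q₁ ≠ 0 := (one_pos.trans_le (hp₁.trans hpq)).ne'
  refine ⟨C + 1, fun j => iSup₂_le fun f hf => ?_⟩
  by_cases hfint : Integrable f
  swap
  · rw [Aj_of_not_integrable j hfint, mixedNorm_zero hq₁ hr]
    exact zero_le
  obtain hA | hA := eq_or_ne (AjOpNorm d χ β₀ j p₀ q₀ r) ∞
  · rw [hA, top_add, ENNReal.mul_top (by simp)]
    exact le_top
  refine (hC j f hA hfint ⟨hfint.1, hf.trans_lt ENNReal.one_lt_top⟩).trans ?_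
  refine (mul_le_of_le_one_right' hf).trans ?_
  gcongr
  exact le_self_add

lemma exists_eLpNorm_Aj_le_eLpNorm_Aj (hχ : Continuous χ) (hχs : HasCompactSupport χ)
    (hβ : IsBump β₀) (d : ℕ) (hr₀ : r₀ ≠ 0) (hr : r₀ ≤ r₁) :
    ∃ C : ℝ≥0, ∀ (j : ℕ) (f : Euc d → ℂ) (x : Euc d), Integrable f →
      eLpNorm (Aj d χ β₀ j f x) r₀ ≤ C * eLpNorm (Aj d χ β₀ j f x) r₁ := by
  obtain ⟨C, hC⟩ := exists_eLpNorm_le_eLpNorm_of_measure_univ_le (α := ℝ) (E := ℂ) hr₀ hr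
    (hχs.isCompact.measure_lt_top (μ := volume)).ne
  refine ⟨C, fun j f x hf => ?_⟩
  have hsupp : Function.support (Aj d χ β₀ j f x) ⊆ tsupport χ := fun t ht =>
    subset_tsupport χ fun hχt => ht (by simp only [Aj, hχt, Complex.ofReal_zero, zero_mul])
  rw [← eLpNorm_restrict_eq_of_support_subset hsupp (p := r₀),
    ← eLpNorm_restrict_eq_of_support_subset hsupp (p := r₁)]
  exact hC _ _ (Measure.restrict_apply_univ _).le (aestronglyMeasurable_Aj hχ hβ j hf x).restrict

lemma exists_AjOpNorm_le_AjOpNorm (hχ : Continuous χ) (hχs : HasCompactSupport χ)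
    (hβ : IsBump β₀) (d : ℕ) (p : ℝ≥0∞) (hq : q ≠ 0) (hr₀ : r₀ ≠ 0) (hr : r₀ ≤ r₁) :
    ∃ C : ℝ≥0, ∀ j : ℕ, AjOpNorm d χ β₀ j p q r₀ ≤ C * AjOpNorm d χ β₀ j p q r₁ := by
  obtain ⟨C, hC⟩ := exists_eLpNorm_Aj_le_eLpNorm_Aj hχ hχs hβ d hr₀ hr
  have hr₁ : r₁ ≠ 0 := (hr₀.bot_lt.trans_le hr).ne'
  refine ⟨C, fun j => iSup₂_le fun f hf => ?_⟩
  by_cases hfint : Integrable f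
  swap
  · rw [Aj_of_not_integrable j hfint, mixedNorm_zero hq hr₀]
    exact zero_le
  calc mixedNorm d q r₀ (Aj d χ β₀ j f) ≤ C * mixedNorm d q r₁ (Aj d χ β₀ j f) := by
        rw [mixedNorm_eq_eLpNorm hq hr₀, mixedNorm_eq_eLpNorm hq hr₁]
        exact eLpNorm_le_nnreal_smul_eLpNorm_of_ae_le_mul' (.of_forall fun x => hC j f x hfint) q
    _ ≤ C * AjOpNorm d χ β₀ j p q r₁ := by
        gcongr
        exact mixedNorm_Aj_le_AjOpNorm χ β₀ j hf

end LocalizedBounds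

theorem localization_lemma_general (d : ℕ) (χ β₀ : ℝ → ℝ) (hχ : Continuous χ)
    (hχs : HasCompactSupport χ) (hβ : IsBump β₀) :
    (∀ p₀ p₁ q₁ q₀ r : ℝ≥0∞, p₀ ≠ 0 → p₀ ≤ p₁ → 1 ≤ p₁ → p₁ ≤ q₁ → q₁ ≤ q₀ → r ≠ 0 →
      ∀ N : ℕ, ∃ C : ℝ≥0, ∀ j : ℕ,
        AjOpNorm d χ β₀ j p₁ q₁ r ≤
          C * (AjOpNorm d χ β₀ j p₀ q₀ r + (2 : ℝ≥0∞) ^ (-((N : ℝ) * j)))) ∧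
    (∀ p q r₀ r₁ : ℝ≥0∞, q ≠ 0 → r₀ ≠ 0 → r₀ ≤ r₁ →
      ∃ C : ℝ≥0, ∀ j : ℕ,
        AjOpNorm d χ β₀ j p q r₀ ≤ C * AjOpNorm d χ β₀ j p q r₁) :=
  ⟨fun _ _ _ _ _ hp₀ hp hp₁ hpq hq hr N =>
      exists_AjOpNorm_le_add hχ hχs hβ d N hp₀ hp hp₁ hpq hq hr,
    fun p _ _ _ hq hr₀ hr => exists_AjOpNorm_le_AjOpNorm hχ hχs hβ d p hq hr₀ hr⟩

/-- Lemma 4.1 (localization): (i) for `p₀ ≤ p₁ ≤ q₁ ≤ q₀` and `1 ≤ r ≤ ∞`,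
`‖𝒜_j‖_{L^{p₁} → L^{q₁}(L^r)} ≲ ‖𝒜_j‖_{L^{p₀} → L^{q₀}(L^r)} + C_N 2^{-jN}`;
(ii) for `r₀ ≤ r₁` and `1 ≤ p ≤ q ≤ ∞`,
`‖𝒜_j‖_{L^p → L^q(L^{r₀})} ≲ ‖𝒜_j‖_{L^p → L^q(L^{r₁})}`, uniformly in `j`. -/
theorem localization_lemma (d : ℕ) (hd : 2 ≤ d) (χ β₀ : ℝ → ℝ)
    (hχ : IsCutoff χ) (hβ : IsBump β₀) :
    (∀ p₀ p₁ q₁ q₀ r : ℝ≥0∞, 1 ≤ p₀ → p₀ ≤ p₁ → p₁ ≤ q₁ → q₁ ≤ q₀ → 1 ≤ r →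
      ∀ N : ℕ, ∃ C : ℝ≥0, ∀ j : ℕ,
        AjOpNorm d χ β₀ j p₁ q₁ r ≤
          C * (AjOpNorm d χ β₀ j p₀ q₀ r + (2 : ℝ≥0∞) ^ (-((N : ℝ) * j)))) ∧
    (∀ p q r₀ r₁ : ℝ≥0∞, 1 ≤ r₀ → r₀ ≤ r₁ → 1 ≤ p → p ≤ q →
      ∃ C : ℝ≥0, ∀ j : ℕ,
        AjOpNorm d χ β₀ j p q r₀ ≤ C * AjOpNorm d χ β₀ j p q r₁) := by
  have hχs : HasCompactSupport χ := .of_support_subset_isCompact isCompact_Icc hχ.2.2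
  obtain ⟨hi, hii⟩ := localization_lemma_general d χ β₀ hχ.1.continuous hχs hβ
  have hne {s : ℝ≥0∞} (hs : 1 ≤ s) : s ≠ 0 := (one_pos.trans_le hs).ne'
  exact ⟨fun p₀ p₁ q₁ q₀ r hp₀ hp hpq hq hr =>
      hi p₀ p₁ q₁ q₀ r (hne hp₀) hp (hp₀.trans hp) hpq hq (hne hr),
    fun p q r₀ r₁ hr₀ hr hp hpq => hii p q r₀ r₁ (hne (hp.trans hpq)) (hne hr₀) hr⟩
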